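/- Let n ≥ 1. For every v ∈ ℍ^{n+1} (ℍ the real quaternions) one has ‖ι_n(v)‖² = (|v₀|² + ⋯ + |v_n|²)² / r_n⁴, where ι_n is the inductively defined map over ℍ described in the context. In particular, if ‖v‖ = r_n then ι_n(v) lies on the unit sphere of its codomain. -/

import Mathlib

/-!
The identity is proved by induction on `n`. The components of `ι_n` vanish from index `numComp n`
on (`iota_eq_zero`), so the series is a finite sum. For `n = 1` the claim is
`4xy + (x - y)² = (x + y)²` with `x = |v₀|²`, `y = |v₁|²`, by multiplicativity of the quaternion norm.
For the step, write `S = |v₀|² + ⋯ + |v_{n-1}|²`, `w = |v_n|²` and `R = r_{n-1}⁴`. The three blocks of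
`ι_n` contribute
`(n+1)⁻¹ (S²/R + a² w S + b² (S - n w)²)` with `b² = 1/((n²-1)R)` and `a² = 2n(n+1) b²`, and the
coefficients are chosen so that this is `n² (S + w)² / ((n+1)(n²-1)R)`. The recursion
`n² r_n⁴ = (n+1)(n²-1) r_{n-1}⁴` (`rad_succ_pow_four`) identifies it with `(S + w)² / r_n⁴`.
-/

open scoped BigOperators

noncomputable section

/-- The radii `r_n` with `r_n^4 = ((n+1)/2)^2 (n-1)!`. -/
def rad (n : ℕ) : ℝ := ((((n : ℝ) + 1) / 2) ^ 2 * (Nat.factorial (n - 1) : ℝ)) ^ ((1 : ℝ) / 4)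

/-- The number of (field) components of `ι_n`. -/
def numComp : ℕ → ℕ
  | 0 => 2
  | 1 => 2
  | (m + 2) => numComp (m + 1) + (m + 2) + 1

/-- The inductively defined maps `ι_n : 𝕜^{n+1} → 𝕜^{L_n+1}` (over `𝕜 = Quaternion ℝ`), recorded via
their components, written as a sequence indexed by `ℕ` that vanishes beyond the
dimension of the codomain.  Real components are embedded into `𝕜` via `algebraMap`. -/
def iota : (n : ℕ) → (Fin (n + 1) → Quaternion ℝ) → ℕ → Quaternion ℝ
  | 0, _, _ => 0
  | 1, v, j =>
      if j = 0 then 2 * v 0 * star (v 1)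
      else if j = 1 then algebraMap ℝ (Quaternion ℝ) (‖v 0‖ ^ 2 - ‖v 1‖ ^ 2)
      else 0
  | (m + 2), v, j =>
      let c : ℝ := ((m : ℝ) + 3) ^ (-(1 : ℝ) / 2)
      let b : ℝ := ((((m : ℝ) + 2) ^ 2 - 1) * (rad (m + 1)) ^ 4) ^ (-(1 : ℝ) / 2)
      let a : ℝ := (2 * ((m : ℝ) + 2) * ((m : ℝ) + 3)) ^ ((1 : ℝ) / 2) * b
      if h : j < numComp (m + 1) then
        algebraMap ℝ (Quaternion ℝ) c * iota (m + 1) (fun i => v i.castSucc) j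
      else if h2 : j < numComp (m + 1) + (m + 2) then
        algebraMap ℝ (Quaternion ℝ) (c * a) * star (v (Fin.last (m + 2))) *
          v ⟨j - numComp (m + 1), by omega⟩
      else if j = numComp (m + 1) + (m + 2) then
        algebraMap ℝ (Quaternion ℝ) (c * b *
          ((∑ i : Fin (m + 2), ‖v i.castSucc‖ ^ 2) - ((m : ℝ) + 2) * ‖v (Fin.last (m + 2))‖ ^ 2))
      else 0

theorem rad_pow_four (n : ℕ) :
    rad n ^ 4 = (((n : ℝ) + 1) / 2) ^ 2 * (Nat.factorial (n - 1) : ℝ) := by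
  unfold rad
  rw [← Real.rpow_natCast, ← Real.rpow_mul (by positivity)]
  norm_num

theorem rad_pow_four_pos (n : ℕ) : 0 < rad n ^ 4 := by
  rw [rad_pow_four]
  positivity

/-- The recursion `n² r_n⁴ = (n+1)² (n-1) r_{n-1}⁴`, for `n = m + 2`. -/
theorem rad_succ_pow_four (m : ℕ) :
    ((m : ℝ) + 2) ^ 2 * rad (m + 2) ^ 4 = ((m : ℝ) + 3) ^ 2 * ((m : ℝ) + 1) * rad (m + 1) ^ 4 := by
  rw [rad_pow_four, rad_pow_four]
  have h : Nat.factorial (m + 2 - 1) = (m + 1) * Nat.factorial (m + 1 - 1) := by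
    simp [Nat.factorial_succ]
  rw [h]
  push_cast
  ring

theorem rpow_neg_half_sq {x : ℝ} (hx : 0 ≤ x) : (x ^ (-(1 : ℝ) / 2)) ^ 2 = x⁻¹ := by
  rw [← Real.rpow_natCast, ← Real.rpow_mul hx, ← Real.rpow_neg_one]
  norm_num

theorem rpow_half_sq {x : ℝ} (hx : 0 ≤ x) : (x ^ ((1 : ℝ) / 2)) ^ 2 = x := by
  rw [← Real.rpow_natCast, ← Real.rpow_mul hx]
  norm_num

theorem norm_algebraMap_sq (x : ℝ) : ‖algebraMap ℝ (Quaternion ℝ) x‖ ^ 2 = x ^ 2 := by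
  rw [norm_algebraMap', Real.norm_eq_abs, sq_abs]

theorem iota_eq_zero (n : ℕ) (v : Fin (n + 1) → Quaternion ℝ) (j : ℕ) (hj : numComp n ≤ j) :
    iota n v j = 0 := by
  match n, v, hj with
  | 0, _, _ => simp [iota]
  | 1, v, hj =>
    simp only [numComp] at hj
    simp only [iota]
    rw [if_neg (by omega), if_neg (by omega)]
  | m + 2, v, hj =>
    simp only [numComp] at hj
    simp only [iota]
    rw [dif_neg (by omega), dif_neg (by omega), if_neg (by omega)]

theorem tsum_iota (n : ℕ) (v : Fin (n + 1) → Quaternion ℝ) :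
    ∑' j : ℕ, ‖iota n v j‖ ^ 2 = ∑ j ∈ Finset.range (numComp n), ‖iota n v j‖ ^ 2 := by
  refine tsum_eq_sum fun j hj => ?_
  rw [iota_eq_zero n v j (by simpa using hj)]
  simp

/-- The contributions of the three blocks of `ι_n` to its squared norm, for `n = m + 2`. -/
theorem sum_iota_succ (m : ℕ) (v : Fin (m + 2 + 1) → Quaternion ℝ) :
    ∑ j ∈ Finset.range (numComp (m + 2)), ‖iota (m + 2) v j‖ ^ 2 =
      ((m : ℝ) + 3)⁻¹ *
        (∑ j ∈ Finset.range (numComp (m + 1)), ‖iota (m + 1) (fun i => v i.castSucc) j‖ ^ 2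
        + (2 * ((m : ℝ) + 2) * ((m : ℝ) + 3)) * ((((m : ℝ) + 2) ^ 2 - 1) * rad (m + 1) ^ 4)⁻¹ *
          ‖v (Fin.last (m + 2))‖ ^ 2 * ∑ i : Fin (m + 2), ‖v i.castSucc‖ ^ 2
        + ((((m : ℝ) + 2) ^ 2 - 1) * rad (m + 1) ^ 4)⁻¹ *
          ((∑ i : Fin (m + 2), ‖v i.castSucc‖ ^ 2)
            - ((m : ℝ) + 2) * ‖v (Fin.last (m + 2))‖ ^ 2) ^ 2) := by
  have hm : (0 : ℝ) ≤ m := m.cast_nonneg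
  have hR := rad_pow_four_pos (m + 1)
  have hc := rpow_neg_half_sq (x := (m : ℝ) + 3) (by positivity)
  have hb := rpow_neg_half_sq (x := (((m : ℝ) + 2) ^ 2 - 1) * rad (m + 1) ^ 4)
    (mul_nonneg (by nlinarith) hR.le)
  have ha := rpow_half_sq (x := 2 * ((m : ℝ) + 2) * ((m : ℝ) + 3)) (by positivity)
  have h1 : ∀ j ∈ Finset.range (numComp (m + 1)), ‖iota (m + 2) v j‖ ^ 2 =
      ((m : ℝ) + 3)⁻¹ * ‖iota (m + 1) (fun i => v i.castSucc) j‖ ^ 2 := by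
    intro j hj
    rw [iota, dif_pos (Finset.mem_range.mp hj), norm_mul, mul_pow, norm_algebraMap_sq, hc]
  have h2 : ∀ i : Fin (m + 2), ‖iota (m + 2) v (numComp (m + 1) + i)‖ ^ 2 =
      ((m : ℝ) + 3)⁻¹ * ((2 * ((m : ℝ) + 2) * ((m : ℝ) + 3)) *
        ((((m : ℝ) + 2) ^ 2 - 1) * rad (m + 1) ^ 4)⁻¹ *
          ‖v (Fin.last (m + 2))‖ ^ 2) * ‖v i.castSucc‖ ^ 2 := by
    intro i
    have hi : (⟨numComp (m + 1) + i - numComp (m + 1), by omega⟩ : Fin (m + 2 + 1))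
        = i.castSucc := by
      ext
      simp
    rw [iota, dif_neg (by omega), dif_pos (by omega), hi, norm_mul, norm_mul, mul_pow, mul_pow,
      norm_algebraMap_sq, mul_pow, mul_pow, hc, hb, ha, norm_star]
    ring
  have h3 : ‖iota (m + 2) v (numComp (m + 1) + (m + 2))‖ ^ 2 =
      ((m : ℝ) + 3)⁻¹ * (((((m : ℝ) + 2) ^ 2 - 1) * rad (m + 1) ^ 4)⁻¹ *
          ((∑ i : Fin (m + 2), ‖v i.castSucc‖ ^ 2)
            - ((m : ℝ) + 2) * ‖v (Fin.last (m + 2))‖ ^ 2) ^ 2) := by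
    rw [iota]
    simp only
    rw [dif_neg (by omega), dif_neg (by omega), if_pos trivial, norm_algebraMap_sq, mul_pow, mul_pow,
      hc, hb]
    ring
  rw [numComp, Finset.sum_range_succ, Finset.sum_range_add, Finset.sum_congr rfl h1,
    Finset.sum_range (n := m + 2), Finset.sum_congr rfl (fun i _ => h2 i), h3,
    ← Finset.mul_sum, ← Finset.mul_sum]
  ring

theorem sum_iota (m : ℕ) (v : Fin (m + 1 + 1) → Quaternion ℝ) :
    ∑ j ∈ Finset.range (numComp (m + 1)), ‖iota (m + 1) v j‖ ^ 2 =
      (∑ i, ‖v i‖ ^ 2) ^ 2 / rad (m + 1) ^ 4 := by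
  induction m with
  | zero =>
    rw [rad_pow_four]
    simp only [numComp, iota, Finset.sum_range_succ, Finset.sum_range_zero,
      if_true, one_ne_zero, if_false, norm_mul, norm_star, norm_algebraMap_sq]
    have h2 : ‖(2 : Quaternion ℝ)‖ = 2 := by
      rw [← map_ofNat (algebraMap ℝ (Quaternion ℝ)) 2, norm_algebraMap']
      norm_num
    have hs : ∑ i, ‖v i‖ ^ 2 = ‖v 0‖ ^ 2 + ‖v 1‖ ^ 2 := Fin.sum_univ_two _
    rw [h2, hs]
    norm_num
    ring
  | succ m ih =>
    rw [sum_iota_succ, ih, Fin.sum_univ_castSucc (n := m + 1 + 1)]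
    have hm : (0 : ℝ) ≤ m := m.cast_nonneg
    have hR := (rad_pow_four_pos (m + 1)).ne'
    have hrec : rad (m + 1 + 1) ^ 4 =
        ((m : ℝ) + 3) ^ 2 * ((m : ℝ) + 1) * rad (m + 1) ^ 4 / ((m : ℝ) + 2) ^ 2 := by
      rw [eq_div_iff (by positivity), ← rad_succ_pow_four]
      ring
    have hfac : ((m : ℝ) + 2) ^ 2 - 1 = ((m : ℝ) + 1) * ((m : ℝ) + 3) := by ring
    rw [hrec, hfac]
    generalize rad (m + 1) ^ 4 = R at hR
    have e1 : (m : ℝ) + 1 ≠ 0 := by positivity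
    have e2 : (m : ℝ) + 2 ≠ 0 := by positivity
    have e3 : (m : ℝ) + 3 ≠ 0 := by positivity
    have hlast : Fin.last (m + 1 + 1) = Fin.last (m + 2) := rfl
    rw [hlast]
    generalize ‖v (Fin.last (m + 2))‖ ^ 2 = w
    generalize (∑ i : Fin (m + 1 + 1), ‖v i.castSucc‖ ^ 2) = S
    field_simp
    ring

theorem norm_sq_iota_quaternion (n : ℕ) (hn : 1 ≤ n) (v : Fin (n + 1) → Quaternion ℝ) :
    (∑' j : ℕ, ‖iota n v j‖ ^ 2) = (∑ i, ‖v i‖ ^ 2) ^ 2 / (rad n) ^ 4 ∧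
      (Real.sqrt (∑ i, ‖v i‖ ^ 2) = rad n → (∑' j : ℕ, ‖iota n v j‖ ^ 2) = 1) := by
  obtain ⟨m, rfl⟩ : ∃ m, n = m + 1 := ⟨n - 1, by omega⟩
  have key := (tsum_iota (m + 1) v).trans (sum_iota m v)
  refine ⟨key, fun h => ?_⟩
  have hS : (0 : ℝ) ≤ ∑ i, ‖v i‖ ^ 2 := Finset.sum_nonneg fun i _ => by positivity
  rw [key, div_eq_one_iff_eq (rad_pow_four_pos _).ne', ← h]
  calc (∑ i, ‖v i‖ ^ 2) ^ 2 = (Real.sqrt (∑ i, ‖v i‖ ^ 2) ^ 2) ^ 2 := by rw [Real.sq_sqrt hS]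
    _ = Real.sqrt (∑ i, ‖v i‖ ^ 2) ^ 4 := by ring

end
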